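/- arXiv:2306.05426 — 3 statements merged into one kernel-verified Lean document; each statement's English description precedes it below -/
import Mathlib

section
/- Let X be a finite type and P, Q probability mass functions on X. Then the supremum, over all functions r : X → ℝ, of ∑_x (P(x)−Q(x))·r(x) − (1/4)·∑_x (P(x)+Q(x))·r(x)² equals ∑_x (P(x)−Q(x))²/(P(x)+Q(x)), where a term of the right-hand sum is taken to be 0 whenever P(x)+Q(x) = 0. Consequently this supremum equals 2·χ²(P‖(P+Q)/2), where χ²(P‖M) = ∑_x M(x)·(P(x)/M(x) − 1)² with terms taken to be 0 when M(x) = 0. -/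
/-!
The objective is a sum over `x` of concave quadratics `(p - q) t - (p + q) t² / 4` in `t = r x`.
When `p + q > 0`, completing the square bounds each by `(p - q)² / (p + q)`, with equality at
`t = 2 (p - q) / (p + q)`; when `p + q = 0` both masses vanish and the term is `0`. So the value
is attained by the critic `2 (P - Q) / (P + Q)`. The link with `χ²(P ‖ (P + Q) / 2)` is a
termwise identity.
-/

/-- Bound on one term, by completing the square. -/
lemma chi_term_le (p q t : ℝ) (hp : 0 ≤ p) (hq : 0 ≤ q) :
    (p - q) * t - 1 / 4 * ((p + q) * t ^ 2)
      ≤ if p + q = 0 then 0 else (p - q) ^ 2 / (p + q) := by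
  split_ifs with h
  · have h1 : p = 0 := by linarith
    have h2 : q = 0 := by linarith
    simp [h1, h2]
  · have h0 : 0 < p + q := lt_of_le_of_ne (by positivity) (Ne.symm h)
    rw [le_div_iff₀ h0]
    nlinarith [sq_nonneg ((p - q) - (p + q) * t / 2)]

lemma chi_term_eq (p q : ℝ) :
    (p - q) * (2 * (p - q) / (p + q)) - 1 / 4 * ((p + q) * (2 * (p - q) / (p + q)) ^ 2)
      = if p + q = 0 then 0 else (p - q) ^ 2 / (p + q) := by
  split_ifs with h
  · simp [h]
  · field_simp
    ring

lemma chi_term_mixture (p q : ℝ) :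
    (if p + q = 0 then 0 else (p - q) ^ 2 / (p + q))
      = 2 * (if (p + q) / 2 = 0 then 0 else (p + q) / 2 * (p / ((p + q) / 2) - 1) ^ 2) := by
  by_cases h : p + q = 0
  · simp [h]
  · have h2 : (p + q) / 2 ≠ 0 := by simpa using h
    rw [if_neg h, if_neg h2]
    field_simp
    ring

/-- Variational form of the χ²-mixture divergence on a finite type: the
supremum over critics `r : X → ℝ` of
`∑ₓ (P x - Q x) * r x - (1/4) * ∑ₓ (P x + Q x) * (r x)^2` equals
`∑ₓ (P x - Q x)^2 / (P x + Q x)` (terms with `P x + Q x = 0` taken to be `0`),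
which in turn equals `2 * χ²(P ‖ (P+Q)/2)`. -/
theorem chi_sq_mixture_variational (X : Type*) [Fintype X] (P Q : PMF X) :
    (⨆ r : X → ℝ,
        (∑ x : X, ((P x).toReal - (Q x).toReal) * r x
          - (1 / 4) * ∑ x : X, ((P x).toReal + (Q x).toReal) * r x ^ 2))
      = ∑ x : X,
          (if (P x).toReal + (Q x).toReal = 0 then 0
           else ((P x).toReal - (Q x).toReal) ^ 2 / ((P x).toReal + (Q x).toReal)) ∧
    (∑ x : X,
          (if (P x).toReal + (Q x).toReal = 0 then 0
           else ((P x).toReal - (Q x).toReal) ^ 2 / ((P x).toReal + (Q x).toReal)))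
      = 2 * ∑ x : X,
          (if ((P x).toReal + (Q x).toReal) / 2 = 0 then 0
           else ((P x).toReal + (Q x).toReal) / 2 *
             ((P x).toReal / (((P x).toReal + (Q x).toReal) / 2) - 1) ^ 2) := by
  constructor
  · refine IsGreatest.csSup_eq ⟨⟨fun x => 2 * ((P x).toReal - (Q x).toReal) /
      ((P x).toReal + (Q x).toReal), ?_⟩, ?_⟩
    · dsimp only
      rw [Finset.mul_sum, ← Finset.sum_sub_distrib]
      exact Finset.sum_congr rfl fun x _ => chi_term_eq _ _
    · rintro _ ⟨r, rfl⟩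
      dsimp only
      rw [Finset.mul_sum, ← Finset.sum_sub_distrib]
      exact Finset.sum_le_sum fun x _ =>
        chi_term_le _ _ _ ENNReal.toReal_nonneg ENNReal.toReal_nonneg
  · rw [Finset.mul_sum]
    exact Finset.sum_congr rfl fun x _ => chi_term_mixture _ _
end

section
/- Define f : (0,∞) → ℝ by f(x) = x·log x − (x+1)·log((x+1)/2). For every real number y with y < log 2, the supremum over real x > 0 of x·y − f(x) equals −log(2 − exp(y)). -/
/-!
With `c = 2 - exp y > 0`, the objective plus `log c` equals `x * log a + log b`, where
`a = exp y * (x + 1) / (2 * x)` and `b = c * (x + 1) / 2`. Since `x * a + b = x + 1`, the inequality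
`log t ≤ t - 1` bounds this by `0`. At `x = exp y / c` both `a` and `b` equal `1`, so the bound
is attained and the supremum is a maximum.
-/

theorem js_objective_eq (x y : ℝ) (hx : 0 < x) (hc : 0 < 2 - Real.exp y) :
    x * y - (x * Real.log x - (x + 1) * Real.log ((x + 1) / 2))
      = x * Real.log (Real.exp y * ((x + 1) / 2) / x)
        + Real.log ((2 - Real.exp y) * ((x + 1) / 2)) - Real.log (2 - Real.exp y) := by
  have h1 : (x + 1) / 2 ≠ 0 := by positivity
  rw [Real.log_div (mul_ne_zero (Real.exp_ne_zero y) h1) hx.ne',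
    Real.log_mul (Real.exp_ne_zero y) h1, Real.log_mul hc.ne' h1, Real.log_exp]
  ring

/-- Legendre–Fenchel conjugate of the Jensen–Shannon generator
`f x = x * log x - (x+1) * log ((x+1)/2)`: for every `y < log 2`,
`sup_{x > 0} (x * y - f x) = -log (2 - exp y)`. -/
theorem conjugate_js_generator (f : ℝ → ℝ)
    (hf : ∀ x : ℝ, 0 < x → f x = x * Real.log x - (x + 1) * Real.log ((x + 1) / 2))
    (y : ℝ) (hy : y < Real.log 2) :
    (⨆ x : {x : ℝ // 0 < x}, ((x : ℝ) * y - f (x : ℝ)))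
      = -Real.log (2 - Real.exp y) := by
  have hc : 0 < 2 - Real.exp y := by
    have := (Real.lt_log_iff_exp_lt two_pos).1 hy
    linarith
  have hmax : IsGreatest (Set.range fun x : {x : ℝ // 0 < x} => (x : ℝ) * y - f (x : ℝ))
      (-Real.log (2 - Real.exp y)) := by
    constructor
    · have hx : 0 < Real.exp y / (2 - Real.exp y) := div_pos (Real.exp_pos y) hc
      refine ⟨⟨_, hx⟩, ?_⟩
      have hhalf : (Real.exp y / (2 - Real.exp y) + 1) / 2 = 1 / (2 - Real.exp y) := by
        field_simp
        ring
      have ha : Real.exp y * (1 / (2 - Real.exp y)) / (Real.exp y / (2 - Real.exp y)) = 1 := by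
        rw [mul_one_div, div_self hx.ne']
      have hb : (2 - Real.exp y) * (1 / (2 - Real.exp y)) = 1 := mul_one_div_cancel hc.ne'
      simp only [hf _ hx]
      rw [js_objective_eq _ y hx hc, hhalf, ha, hb, Real.log_one]
      ring
    · rintro _ ⟨⟨x, hx⟩, rfl⟩
      simp only [hf x hx]
      rw [js_objective_eq x y hx hc]
      have ha := Real.log_le_sub_one_of_pos
        (show 0 < Real.exp y * ((x + 1) / 2) / x by positivity)
      have hb := Real.log_le_sub_one_of_pos
        (show 0 < (2 - Real.exp y) * ((x + 1) / 2) by positivity)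
      have hxa := mul_le_mul_of_nonneg_left ha hx.le
      have hcancel : x * (Real.exp y * ((x + 1) / 2) / x - 1)
          = Real.exp y * ((x + 1) / 2) - x := by
        field_simp
      linarith
  exact hmax.csSup_eq
end

section
/- Let X be a finite type, let P and Q be probability mass functions on X with Q(x) > 0 for every x, and let f : ℝ → ℝ be a convex function. For y ∈ ℝ write f*(y) for the extended real number sup_{t∈ℝ} (t·y − f(t)). Then the supremum, over all functions g : X → ℝ such that f*(g(x)) < ∞ for every x, of ∑_x P(x)·g(x) − ∑_x Q(x)·f*(g(x)) equals ∑_x Q(x)·f(P(x)/Q(x)). -/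
/-!
The supremum is attained. Young's inequality `t * y - f t ≤ f⋆ y`, applied at the likelihood
ratio `t = P x / Q x` with `y = g x` and weighted by `Q x > 0`, bounds the objective at every
admissible critic by the f-divergence. A convex function on all of `ℝ` has a subgradient at every
point (`exists_subgradient`), and Young's inequality is an equality when `y` is a subgradient of
`f` at `t` (`conj_eq_of_subgradient`). Choosing for `g x` a subgradient of `f` at `P x / Q x`
thus gives an admissible critic with equality throughout.
-/

/-- The right derivative is a subgradient: it bounds the slopes of the chords to the right from
below, and, dominating the left derivative, the slopes of the chords to the left from above. -/
lemma exists_subgradient {f : ℝ → ℝ} (hf : ConvexOn ℝ Set.univ f) (t : ℝ) :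
    ∃ y : ℝ, ∀ s : ℝ, f t + y * (s - t) ≤ f s := by
  have ht : t ∈ interior (Set.univ : Set ℝ) := by simp
  refine ⟨derivWithin f (Set.Ioi t) t, fun s => ?_⟩
  rcases lt_trichotomy s t with h | rfl | h
  · have h1 := (hf.slope_le_leftDeriv_of_mem_interior (Set.mem_univ s) ht h).trans
      (hf.leftDeriv_le_rightDeriv_of_mem_interior ht)
    rw [slope_def_field, div_le_iff₀ (by linarith)] at h1
    linarith
  · simp
  · have h1 := hf.rightDeriv_le_slope_of_mem_interior ht (Set.mem_univ s) h
    rw [slope_def_field, le_div_iff₀ (by linarith)] at h1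
    linarith

lemma conj_eq_of_subgradient {f : ℝ → ℝ} {t y : ℝ} (h : ∀ s : ℝ, f t + y * (s - t) ≤ f s) :
    (⨆ s : ℝ, ((s * y - f s : ℝ) : EReal)) = ((t * y - f t : ℝ) : EReal) := by
  refine le_antisymm (iSup_le fun s => EReal.coe_le_coe_iff.2 ?_)
    (le_iSup (fun s : ℝ => ((s * y - f s : ℝ) : EReal)) t)
  linarith [h s]

/-- Young's inequality for the real value of the conjugate. Finiteness is needed because `toReal`
sends `⊤` to `0`. -/
lemma young_toReal {f : ℝ → ℝ} {y : ℝ} (h : (⨆ s : ℝ, ((s * y - f s : ℝ) : EReal)) < ⊤) (t : ℝ) :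
    t * y - f t ≤ (⨆ s : ℝ, ((s * y - f s : ℝ) : EReal)).toReal := by
  have h1 := le_iSup (fun s : ℝ => ((s * y - f s : ℝ) : EReal)) t
  have h2 := EReal.toReal_le_toReal h1 (EReal.coe_ne_bot _) h.ne
  simpa only [EReal.toReal_coe] using h2

/-- Variational (dual) representation of the f-divergence on a finite type:
for `Q` everywhere positive and `f : ℝ → ℝ` convex, with `f⋆` its
Legendre–Fenchel conjugate (valued in extended reals), the supremum over
critics `g : X → ℝ` with `f⋆ (g x) < ∞` everywhere of
`E_P[g] - E_Q[f⋆ ∘ g]` equals `D_f(P, Q) = ∑ₓ Q x * f (P x / Q x)`. -/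
theorem f_divergence_variational (X : Type*) [Fintype X]
    (P Q : PMF X) (hQ : ∀ x : X, 0 < Q x)
    (f : ℝ → ℝ) (hf : ConvexOn ℝ Set.univ f)
    (fstar : ℝ → EReal)
    (hfstar : ∀ y : ℝ, fstar y = ⨆ t : ℝ, ((t * y - f t : ℝ) : EReal)) :
    (⨆ g : {g : X → ℝ // ∀ x : X, fstar (g x) < ⊤},
        (∑ x : X, (P x).toReal * g.1 x
          - ∑ x : X, (Q x).toReal * (fstar (g.1 x)).toReal))
      = ∑ x : X, (Q x).toReal * f ((P x).toReal / (Q x).toReal) := by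
  have hQ' : ∀ x, 0 < (Q x).toReal := fun x => ENNReal.toReal_pos (hQ x).ne' (Q.apply_ne_top x)
  have hPQ : ∀ x, (Q x).toReal * ((P x).toReal / (Q x).toReal) = (P x).toReal :=
    fun x => mul_div_cancel₀ _ (hQ' x).ne'
  refine IsGreatest.csSup_eq ⟨?_, ?_⟩
  · choose y hy using fun x => exists_subgradient hf ((P x).toReal / (Q x).toReal)
    have hc : ∀ x, fstar (y x) = _ := fun x =>
      (hfstar (y x)).trans (conj_eq_of_subgradient (hy x))
    refine ⟨⟨y, fun x => by rw [hc x]; exact EReal.coe_lt_top _⟩, ?_⟩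
    dsimp only
    rw [← Finset.sum_sub_distrib]
    refine Finset.sum_congr rfl fun x _ => ?_
    rw [hc x, EReal.toReal_coe]
    linear_combination (-y x) * hPQ x
  · rintro _ ⟨⟨g, hg⟩, rfl⟩
    dsimp only
    rw [← Finset.sum_sub_distrib]
    refine Finset.sum_le_sum fun x _ => ?_
    have h := hg x
    rw [hfstar] at h ⊢
    have h1 := mul_le_mul_of_nonneg_left
      (young_toReal h ((P x).toReal / (Q x).toReal)) (hQ' x).le
    rw [mul_sub, ← mul_assoc, hPQ x] at h1
    linarith
end
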